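/- With the generic-elements setup (G abelian, U a G-graded simple algebra finite-dimensional over F = Γ(U)_e, F_U the algebra of generic elements inside Ũ = F̃ ⊗_F U, S_U = Z(M(F_U))_e \ {0}, K_U = Γ(S_U^{-1}F_U)_e identified with a subfield of F̃): the map F̃ ⊗_{K_U} (S_U^{-1}F_U) → Ũ given by λ̃ ⊗ x ↦ λ̃x, for λ̃ ∈ F̃ and x ∈ S_U^{-1}F_U, is an isomorphism of G-graded algebras. -/

import Mathlib

noncomputable section

variable (K : Type*) [Field K]
variable {G : Type*} [CommGroup G] [DecidableEq G]
variable {A : Type*} [NonUnitalNonAssocSemiring A] [Module K A]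
  [SMulCommClass K A A] [IsScalarTower K A A]

/-- `𝒜` is a `G`-grading of the (not necessarily associative or unital) algebra `A`. -/
def IsAlgGrading (𝒜 : G → Submodule K A) : Prop :=
  DirectSum.IsInternal 𝒜 ∧ ∀ (g h : G), ∀ a ∈ 𝒜 g, ∀ b ∈ 𝒜 h, a * b ∈ 𝒜 (g * h)

/-- A submodule is homogeneous if it is the sum of its intersections with the components. -/
def IsHomogSubmodule (𝒜 : G → Submodule K A) (I : Submodule K A) : Prop :=
  I = ⨆ g, I ⊓ 𝒜 g

/-- two-sided ideal of a nonassociative algebra -/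
def IsMulIdeal (I : Submodule K A) : Prop :=
  ∀ a : A, ∀ x ∈ I, a * x ∈ I ∧ x * a ∈ I

/-- graded simple: `A·A ≠ 0` and no nontrivial homogeneous ideals. -/
def IsGradedSimple (𝒜 : G → Submodule K A) : Prop :=
  (∃ a b : A, a * b ≠ 0) ∧
    ∀ I : Submodule K A, IsMulIdeal K I → IsHomogSubmodule K 𝒜 I → I = ⊥ ∨ I = ⊤

/-- The multiplication algebra: the subalgebra of `End_K A` generated by left and right
multiplications. -/
def MultAlg : NonUnitalSubalgebra K (Module.End K A) :=
  NonUnitalAlgebra.adjoin K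
    (Set.range (LinearMap.mulLeft K (A := A)) ∪ Set.range (LinearMap.mulRight K (A := A)))

/-- The homogeneous component of degree `h` of `End_K A`: maps sending `𝒜 g` into `𝒜 (h*g)`. -/
def endGrading (𝒜 : G → Submodule K A) (h : G) : Submodule K (Module.End K A) where
  carrier := {φ | ∀ g : G, ∀ x ∈ 𝒜 g, φ x ∈ 𝒜 (h * g)}
  add_mem' := fun hf hg g x hx => (𝒜 _).add_mem (hf g x hx) (hg g x hx)
  zero_mem' := fun g x hx => (𝒜 _).zero_mem
  smul_mem' := fun c f hf g x hx => (𝒜 _).smul_mem c (hf g x hx)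

/-- The centroid of `A`: endomorphisms commuting with all left and right multiplications. -/
def centroid : Submodule K (Module.End K A) where
  carrier := {φ | ∀ a x : A, φ (a * x) = a * φ x ∧ φ (x * a) = φ x * a}
  add_mem' := by
    intro f g hf hg a x
    refine ⟨?_, ?_⟩ <;>
      simp [LinearMap.add_apply, (hf a x).1, (hg a x).1, (hf a x).2, (hg a x).2, mul_add, add_mul]
  zero_mem' := by intro a x; simp
  smul_mem' := by
    intro c f hf a x
    refine ⟨?_, ?_⟩ <;>
      simp [LinearMap.smul_apply, (hf a x).1, (hf a x).2, mul_smul_comm, smul_mul_assoc]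

/-- The graded centroid `Γ(A)`: the sums of homogeneous centroid elements. -/
def gradedCentroid (𝒜 : G → Submodule K A) : Submodule K (Module.End K A) :=
  ⨆ h : G, centroid K ⊓ endGrading K 𝒜 h

/-- graded polynomial identity, variables indexed by `G × ℕ`, the variable `(g, i)` having
degree `g`. -/
def IsGradedPI (𝒜 : G → Submodule K A) (f : FreeNonUnitalNonAssocAlgebra K (G × ℕ)) : Prop :=
  ∀ v : G × ℕ → A, (∀ p, v p ∈ 𝒜 p.1) → FreeNonUnitalNonAssocAlgebra.lift K v f = 0

/-- ordinary polynomial identity of a not necessarily associative algebra -/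
def IsPI (f : FreeNonUnitalNonAssocAlgebra K ℕ) : Prop :=
  ∀ v : ℕ → A, FreeNonUnitalNonAssocAlgebra.lift K v f = 0

/-- A subset `S` of an associative unital `K`-algebra `B` satisfies an ordinary polynomial
identity. -/
def SatisfiesOrdinaryPI {B : Type*} [Semiring B] [Algebra K B] (S : Set B) : Prop :=
  ∃ f : FreeAlgebra K ℕ, f ≠ 0 ∧
    ∀ v : ℕ → B, (∀ i, v i ∈ S) → FreeAlgebra.lift K v f = 0

/-- isomorphism of `G`-graded algebras -/
def IsGradedIso {B : Type*} [NonUnitalNonAssocSemiring B] [Module K B]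
    (𝒜 : G → Submodule K A) (ℬ : G → Submodule K B) : Prop :=
  ∃ ψ : A ≃ₗ[K] B, (∀ x y : A, ψ (x * y) = ψ x * ψ y) ∧
    ∀ g : G, (𝒜 g).map (ψ : A →ₗ[K] B) = ℬ g

end

noncomputable section

variable (K : Type*) [Field K]

/-- `f` is an ordinary (associative) polynomial identity of the subset `S` of the associative
unital algebra `B`. -/
def IsAssocPIOn {B : Type*} [Semiring B] [Algebra K B] (S : Set B) (f : FreeAlgebra K ℕ) : Prop :=
  ∀ v : ℕ → B, (∀ i, v i ∈ S) → FreeAlgebra.lift K v f = 0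

end

noncomputable section

open TensorProduct

variable (F : Type*) [Field F] {G : Type*} [CommGroup G] [DecidableEq G]
variable (FF : Type*) [Field FF] [Algebra F FF] [Algebra (MvPolynomial (G × ℕ × ℕ) F) FF]
  [IsScalarTower F (MvPolynomial (G × ℕ × ℕ) F) FF]
variable {A : Type*} [NonUnitalNonAssocRing A] [Module F A] [SMulCommClass F A A]
  [IsScalarTower F A A]

/-- the set of generic elements `y_i^g = ∑_j t_{ij}^g ⊗ u_j^g` of `Ũ = FF ⊗ U`,
relative to the choice of bases `bU g` of the homogeneous components. -/
def genericElems (𝒜 : G → Submodule F A) (nU : G → ℕ)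
    (bU : ∀ g : G, Module.Basis (Fin (nU g)) F (𝒜 g)) : Set (FF ⊗[F] A) :=
  {x | ∃ (g : G) (i : Fin (nU g)), x = ∑ j : Fin (nU g),
    (algebraMap (MvPolynomial (G × ℕ × ℕ) F) FF (MvPolynomial.X (g, (i : ℕ), (j : ℕ)))) ⊗ₜ[F]
      ((bU g j : A))}

/-- the algebra of generic elements `F_U`, an `F`-subalgebra of `Ũ = FF ⊗ U`. -/
def genericAlg (𝒜 : G → Submodule F A) (nU : G → ℕ)
    (bU : ∀ g : G, Module.Basis (Fin (nU g)) F (𝒜 g)) : NonUnitalSubalgebra F (FF ⊗[F] A) :=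
  NonUnitalAlgebra.adjoin F (genericElems F FF 𝒜 nU bU)

/-- the degree-`g` component of an `F`-subalgebra `L` of `Ũ = FF ⊗ U`, induced by the grading
of `Ũ`. -/
def subComp (𝒜 : G → Submodule F A) (L : NonUnitalSubalgebra F (FF ⊗[F] A)) (g : G) :
    Submodule F ↥L where
  carrier := {x | (x : FF ⊗[F] A) ∈ (𝒜 g).baseChange FF}
  add_mem' := fun {x y} hx hy => by
    simpa using (((𝒜 g).baseChange FF).restrictScalars F).add_mem hx hy
  zero_mem' := by simp
  smul_mem' := fun c x hx => by
    simpa using (((𝒜 g).baseChange FF).restrictScalars F).smul_mem c hx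

/-- the degree-`e` component `Z(M(F_U))_e` of the center of the multiplication algebra of an
`F`-subalgebra `L` of `Ũ` (applied below to `L = F_U` and to its central localization). -/
def centerMultE (𝒜 : G → Submodule F A) (L : NonUnitalSubalgebra F (FF ⊗[F] A)) :
    Set (Module.End F ↥L) :=
  {m | m ∈ MultAlg F (A := ↥L) ∧ (∀ m' ∈ MultAlg F (A := ↥L), m * m' = m' * m) ∧
    m ∈ endGrading F (subComp F FF 𝒜 L) 1}

end

open TensorProduct

/-!
Write `C = F_U` and `L = S_U⁻¹F_U`. The generic matrices `(t_{ij}^g)` are invertible, so `C`, and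
with it `L`, spans `Ũ` over `FF`. For injectivity the point is that `L` is graded simple: then, by
the density theorem for the algebra generated by the multiplications and the homogeneous
projections of `L`, a family of `L` independent over `Γ(L)_e` can be mapped to any other family by
an operator which extends `FF`-linearly to `Ũ`, and hence it is independent over `FF`.

For graded simplicity, let `J` be a nonzero graded ideal of `L`, and `W = J ∩ C`. The `FF`-span of
`W` is a nonzero graded ideal of `Ũ`, which is graded simple as `Γ(U)_e = F`, so `W` spans `Ũ`. A
nonzero scalar of `Z(M(C))_e` is a polynomial in the `t_{ij}^g`, and it is also a composite
expression in multiplications by elements that the generic elements generate. Substituting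
suitable elements of `W` for the generic elements, which by Zariski density can be done without
making the scalar vanish, gives a nonzero scalar `z` in the multiplication algebra of `W`; as `z`
is invertible on `L` and maps `L` into `J`, it follows that `J = L`.
-/

section ProjectionFamily

/-- The projections `p g` of a `G`-graded module `M = ⨁ g, 𝒜 g` onto its homogeneous components.
Working with the projections rather than with a chosen decomposition makes base change and
restriction to submodules immediate. -/
structure IsProjectionFamily {K G M : Type*} [Semiring K] [AddCommMonoid M] [Module K M]
    (𝒜 : G → Submodule K M) (p : G → Module.End K M) : Prop where
  apply_of_mem : ∀ {g x}, x ∈ 𝒜 g → p g x = x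
  apply_of_mem_of_ne : ∀ {g h x}, h ≠ g → x ∈ 𝒜 h → p g x = 0
  iSup_eq_top : ⨆ g, 𝒜 g = ⊤

namespace IsProjectionFamily

section Semiring

variable {K G M : Type*} [Semiring K] [AddCommMonoid M] [Module K M]
  {𝒜 : G → Submodule K M} {p : G → Module.End K M}

theorem mem_iSup (hp : IsProjectionFamily 𝒜 p) (x : M) : x ∈ ⨆ g, 𝒜 g :=
  hp.iSup_eq_top ▸ Submodule.mem_top

theorem apply_mem (hp : IsProjectionFamily 𝒜 p) (g : G) (x : M) : p g x ∈ 𝒜 g := by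
  induction hp.mem_iSup x using Submodule.iSup_induction' with
  | mem h x hx =>
    obtain rfl | hne := eq_or_ne h g
    · rwa [hp.apply_of_mem hx]
    · rw [hp.apply_of_mem_of_ne hne hx]
      exact zero_mem _
  | zero => rw [map_zero]; exact zero_mem _
  | add x y _ _ hx hy => rw [map_add]; exact add_mem hx hy

theorem exists_finset_sum_apply_eq (hp : IsProjectionFamily 𝒜 p) (x : M) :
    ∃ S : Finset G, ∑ g ∈ S, p g x = x := by
  obtain ⟨f, hf, rfl⟩ := (Submodule.mem_iSup_iff_exists_finsupp _ _).1 (hp.mem_iSup x)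
  refine ⟨f.support, Finset.sum_congr rfl fun g hg => ?_⟩
  rw [map_finsuppSum, Finsupp.sum, Finset.sum_eq_single_of_mem g hg
    fun h _ hne => hp.apply_of_mem_of_ne hne (hf h), hp.apply_of_mem (hf g)]

end Semiring

theorem exists_of_isInternal {K G M : Type*} [Semiring K] [AddCommMonoid M] [Module K M]
    [DecidableEq G] {𝒜 : G → Submodule K M} (h𝒜 : DirectSum.IsInternal 𝒜) :
    ∃ p, IsProjectionFamily 𝒜 p := by
  let _ := h𝒜.chooseDecomposition
  refine ⟨fun g => (𝒜 g).subtype ∘ₗ DirectSum.component K G (fun i => 𝒜 i) g ∘ₗ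
    (DirectSum.decomposeLinearEquiv 𝒜).toLinearMap, ?_, ?_, h𝒜.submodule_iSup_eq_top⟩
  · exact fun hx => DirectSum.decompose_of_mem_same 𝒜 hx
  · exact fun hne hx => DirectSum.decompose_of_mem_ne 𝒜 hx hne

theorem baseChange {F G M : Type*} (FF : Type*) [CommSemiring F] [CommSemiring FF] [Algebra F FF]
    [AddCommMonoid M] [Module F M] {𝒜 : G → Submodule F M} {p : G → Module.End F M}
    (hp : IsProjectionFamily 𝒜 p) :
    IsProjectionFamily (fun g => (𝒜 g).baseChange FF) (fun g => (p g).baseChange FF) where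
  apply_of_mem := by
    rintro g _ ⟨x, rfl⟩
    induction x with
    | zero => simp
    | tmul a u => simp [hp.apply_of_mem u.2]
    | add x y hx hy => rw [map_add, map_add, hx, hy]
  apply_of_mem_of_ne := by
    rintro g h _ hne ⟨x, rfl⟩
    induction x with
    | zero => simp
    | tmul a u => simp [hp.apply_of_mem_of_ne hne u.2]
    | add x y hx hy => rw [map_add, map_add, hx, hy, add_zero]
  iSup_eq_top := by
    refine eq_top_iff.2 ?_
    rw [← Submodule.baseChange_top, ← hp.iSup_eq_top, Submodule.baseChange_eq_span,
      Submodule.span_le]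
    rintro _ ⟨x, hx, rfl⟩
    induction hx using Submodule.iSup_induction' with
    | mem g x hx =>
      exact Submodule.mem_iSup_of_mem g (Submodule.tmul_mem_baseChange_of_mem _ hx)
    | zero => rw [map_zero]; exact zero_mem _
    | add x y _ _ hx hy => rw [map_add]; exact add_mem hx hy

theorem isHomogSubmodule_iff {K G A : Type*} [Field K] [NonUnitalNonAssocSemiring A] [Module K A]
    {𝒜 : G → Submodule K A} {p : G → Module.End K A} (hp : IsProjectionFamily 𝒜 p)
    {I : Submodule K A} : IsHomogSubmodule K 𝒜 I ↔ ∀ g, ∀ x ∈ I, p g x ∈ I := by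
  constructor
  · intro hI g x hx
    rw [hI] at hx
    induction hx using Submodule.iSup_induction' with
    | mem h x hx =>
      obtain rfl | hne := eq_or_ne h g
      · rw [hp.apply_of_mem hx.2]
        exact hx.1
      · rw [hp.apply_of_mem_of_ne hne hx.2]
        exact zero_mem _
    | zero => rw [map_zero]; exact zero_mem _
    | add x y _ _ hx hy => rw [map_add]; exact add_mem hx hy
  · refine fun hI => le_antisymm (fun x hx => ?_) (iSup_le fun g => inf_le_left)
    obtain ⟨S, hS⟩ := hp.exists_finset_sum_apply_eq x
    exact hS ▸ sum_mem fun g _ => Submodule.mem_iSup_of_mem g ⟨hI g x hx, hp.apply_mem g x⟩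

theorem exists_subComp {F G FF A : Type*} [Field F] [Field FF] [Algebra F FF]
    [NonUnitalNonAssocRing A] [Module F A] [SMulCommClass F A A] [IsScalarTower F A A]
    {𝒜 : G → Submodule F A} {p : G → Module.End F A}
    (hp : IsProjectionFamily 𝒜 p) {L : NonUnitalSubalgebra F (FF ⊗[F] A)}
    (hL : ∀ g, ∀ x ∈ L, (p g).baseChange FF x ∈ L) :
    ∃ q : G → Module.End F L, IsProjectionFamily (subComp F FF 𝒜 L) q ∧
      ∀ g x, (q g x : FF ⊗[F] A) = (p g).baseChange FF x := by
  let q (g : G) : Module.End F L :=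
    (((p g).baseChange FF).restrictScalars F).restrict
      (p := L.toSubmodule) (q := L.toSubmodule) (hL g)
  refine ⟨q, ⟨?_, ?_, eq_top_iff.2 fun x _ => ?_⟩, fun _ _ => rfl⟩
  · exact fun hx => Subtype.ext ((hp.baseChange FF).apply_of_mem hx)
  · exact fun hne hx => Subtype.ext ((hp.baseChange FF).apply_of_mem_of_ne hne hx)
  · obtain ⟨S, hS⟩ := (hp.baseChange FF).exists_finset_sum_apply_eq (x : FF ⊗[F] A)
    have hx : ∑ g ∈ S, q g x = x := Subtype.ext ((AddSubmonoidClass.coe_finsetSum _ _).trans hS)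
    rw [← hx]
    exact sum_mem fun g _ => Submodule.mem_iSup_of_mem g ((hp.baseChange FF).apply_mem g _)

end IsProjectionFamily

end ProjectionFamily

section Density

theorem exists_smul_eq_of_linearIndependent {R M ι : Type*} [Ring R] [AddCommGroup M] [Module R M]
    [IsSimpleModule R M] [Finite ι] {x : ι → M} (hx : LinearIndependent (Module.End R M) x)
    (y : ι → M) : ∃ r : R, ∀ i, r • x i = y i := by
  classical
  have := Fintype.ofFinite ι
  obtain ⟨inv, hinv⟩ := LinearMap.exists_leftInverse_of_injective
    (K := Module.End R M) (Finsupp.linearCombination (Module.End R M) x) (LinearMap.ker_eq_bot.2 hx)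
  let f : Module.End (Module.End R M) M := Finsupp.linearCombination (Module.End R M) y ∘ₗ inv
  have hf (i : ι) : f (x i) = y i := by
    simpa [f] using
      congr(Finsupp.linearCombination (Module.End R M) y ($hinv (Finsupp.single i 1)))
  obtain ⟨r, hr⟩ := jacobson_density f (Finset.univ.image x)
  exact ⟨r, fun i => (hr _ (Finset.mem_image_of_mem x (Finset.mem_univ i))).symm.trans (hf i)⟩

variable {K G A : Type*} [Field K] [NonUnitalNonAssocRing A]
  [Module K A] [SMulCommClass K A A] [IsScalarTower K A A]

/-- The unital algebra of operators generated by the multiplications of `A` and the projections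
`p g` of a grading of `A`: its invariant subspaces are the homogeneous ideals, and its commutant
is the degree-`1` part of the centroid. -/
def gradedMultAlg (p : G → Module.End K A) : Subalgebra K (Module.End K A) :=
  Algebra.adjoin K (Set.range (LinearMap.mulLeft K (A := A)) ∪
    Set.range (LinearMap.mulRight K (A := A)) ∪ Set.range p)

theorem mulLeft_mem_gradedMultAlg (p : G → Module.End K A) (a : A) :
    LinearMap.mulLeft K a ∈ gradedMultAlg p :=
  Algebra.subset_adjoin (.inl (.inl ⟨a, rfl⟩))

theorem mulRight_mem_gradedMultAlg (p : G → Module.End K A) (a : A) :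
    LinearMap.mulRight K a ∈ gradedMultAlg p :=
  Algebra.subset_adjoin (.inl (.inr ⟨a, rfl⟩))

theorem projection_mem_gradedMultAlg (p : G → Module.End K A) (g : G) : p g ∈ gradedMultAlg p :=
  Algebra.subset_adjoin (.inr ⟨g, rfl⟩)

variable {𝒜 : G → Submodule K A} {p : G → Module.End K A}

theorem IsGradedSimple.isSimpleModule_gradedMultAlg (hA : IsGradedSimple K 𝒜)
    (hp : IsProjectionFamily 𝒜 p) : IsSimpleModule (gradedMultAlg p) A := by
  obtain ⟨⟨a, b, hab⟩, hideal⟩ := hA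
  have : Nontrivial A := ⟨⟨a * b, 0, hab⟩⟩
  refine { eq_bot_or_eq_top := fun N => ?_ }
  have hN : ∀ r ∈ gradedMultAlg p, ∀ x ∈ N, r x ∈ N := fun r hr x hx => N.smul_mem ⟨r, hr⟩ hx
  have hNideal : IsMulIdeal K (N.restrictScalars K) := fun a x hx =>
    ⟨hN _ (mulLeft_mem_gradedMultAlg p a) x hx, hN _ (mulRight_mem_gradedMultAlg p a) x hx⟩
  have hNhomog : IsHomogSubmodule K 𝒜 (N.restrictScalars K) :=
    hp.isHomogSubmodule_iff.2 fun g x hx => hN _ (projection_mem_gradedMultAlg p g) x hx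
  simpa using hideal _ hNideal hNhomog

variable [CommGroup G]

theorem restrictScalars_mem_centroid_inf_endGrading (hp : IsProjectionFamily 𝒜 p)
    (φ : Module.End (gradedMultAlg p) A) :
    φ.restrictScalars K ∈ centroid K (A := A) ⊓ endGrading K 𝒜 1 := by
  have hφ : ∀ r ∈ gradedMultAlg p, ∀ x, φ (r x) = r (φ x) := fun r hr => φ.map_smul ⟨r, hr⟩
  refine ⟨fun a x => ⟨hφ _ (mulLeft_mem_gradedMultAlg p a) x,
    hφ _ (mulRight_mem_gradedMultAlg p a) x⟩, fun g x hx => ?_⟩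
  have hφx : φ x = p g (φ x) := by
    rw [← hφ _ (projection_mem_gradedMultAlg p g), hp.apply_of_mem hx]
  rw [one_mul, LinearMap.restrictScalars_apply, hφx]
  exact hp.apply_mem g _

theorem IsGradedSimple.exists_gradedMultAlg_apply_eq (hA : IsGradedSimple K 𝒜)
    (hp : IsProjectionFamily 𝒜 p) {ι : Type*} [Fintype ι] {x : ι → A}
    (hx : ∀ c : ι → Module.End K A, (∀ i, c i ∈ centroid K (A := A) ⊓ endGrading K 𝒜 1) →
      ∑ i, c i (x i) = 0 → ∀ i, c i = 0) (y : ι → A) :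
    ∃ r ∈ gradedMultAlg p, ∀ i, r (x i) = y i := by
  have := hA.isSimpleModule_gradedMultAlg hp
  have hli : LinearIndependent (Module.End (gradedMultAlg p) A) x := by
    refine Fintype.linearIndependent_iff.2 fun c hc i => LinearMap.restrictScalars_injective K ?_
    exact hx (fun i => (c i).restrictScalars K)
      (fun i => restrictScalars_mem_centroid_inf_endGrading hp (c i)) hc i
  obtain ⟨r, hr⟩ := exists_smul_eq_of_linearIndependent hli y
  exact ⟨r, r.2, hr⟩

end Density

section BaseChange

variable {F G FF A : Type*} [Field F] [Field FF] [Algebra F FF]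
  [NonUnitalNonAssocRing A] [Module F A] [SMulCommClass F A A] [IsScalarTower F A A]

theorem baseChange_mulLeft_apply (a : A) (x : FF ⊗[F] A) :
    (LinearMap.mulLeft F a).baseChange FF x = (1 ⊗ₜ[F] a) * x := by
  induction x with
  | zero => simp
  | add x y hx hy => rw [map_add, hx, hy, mul_add]
  | tmul b v => simp

theorem baseChange_mulRight_apply (a : A) (x : FF ⊗[F] A) :
    (LinearMap.mulRight F a).baseChange FF x = x * (1 ⊗ₜ[F] a) := by
  induction x with
  | zero => simp
  | add x y hx hy => rw [map_add, hx, hy, add_mul]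
  | tmul b v => simp

theorem baseChange_apply_mem_of_mem_gradedMultAlg {p : G → Module.End F A}
    {J : Submodule FF (FF ⊗[F] A)} (hJ : IsMulIdeal FF J)
    (hJp : ∀ g, ∀ x ∈ J, (p g).baseChange FF x ∈ J) {r : Module.End F A}
    (hr : r ∈ gradedMultAlg p) {x : FF ⊗[F] A} (hx : x ∈ J) : r.baseChange FF x ∈ J := by
  induction hr using Algebra.adjoin_induction generalizing x with
  | mem r hr =>
    obtain (⟨a, rfl⟩ | ⟨a, rfl⟩) | ⟨g, rfl⟩ := hr
    · rw [baseChange_mulLeft_apply]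
      exact (hJ _ x hx).1
    · rw [baseChange_mulRight_apply]
      exact (hJ _ x hx).2
    · exact hJp g x hx
  | algebraMap c =>
    rw [Algebra.algebraMap_eq_smul_one, LinearMap.baseChange_smul, LinearMap.baseChange_one]
    exact (J.restrictScalars F).smul_mem c hx
  | add r s _ _ hr hs =>
    rw [LinearMap.baseChange_add]
    exact J.add_mem (hr hx) (hs hx)
  | mul r s _ _ hr hs =>
    rw [LinearMap.baseChange_mul]
    exact hr (hs hx)

variable [CommGroup G] {𝒜 : G → Submodule F A} {p : G → Module.End F A}

theorem IsGradedSimple.exists_gradedMultAlg_apply_eq_of_linearIndependent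
    (hA : IsGradedSimple F 𝒜) (hp : IsProjectionFamily 𝒜 p)
    (hcentral : ∀ φ ∈ centroid F (A := A) ⊓ endGrading F 𝒜 1, ∃ c : F, φ = c • 1)
    {ι : Type*} [Finite ι] {x : ι → A} (hx : LinearIndependent F x) (y : ι → A) :
    ∃ r ∈ gradedMultAlg p, ∀ i, r (x i) = y i := by
  have := Fintype.ofFinite ι
  refine hA.exists_gradedMultAlg_apply_eq hp (fun φ hφ hsum i => ?_) y
  choose c hc using fun i => hcentral (φ i) (hφ i)
  have hc0 := Fintype.linearIndependent_iff.1 hx c (by simpa [hc] using hsum) i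
  rw [hc, hc0, zero_smul]

theorem IsGradedSimple.exists_ne_zero_forall_tmul_mem (hA : IsGradedSimple F 𝒜)
    (hp : IsProjectionFamily 𝒜 p)
    (hcentral : ∀ φ ∈ centroid F (A := A) ⊓ endGrading F 𝒜 1, ∃ c : F, φ = c • 1)
    {J : Submodule FF (FF ⊗[F] A)} (hJ : IsMulIdeal FF J)
    (hJp : ∀ g, ∀ x ∈ J, (p g).baseChange FF x ∈ J) (hJbot : J ≠ ⊥) :
    ∃ c : FF, c ≠ 0 ∧ ∀ v : A, c ⊗ₜ[F] v ∈ J := by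
  classical
  obtain ⟨x, hxJ, hx0⟩ := J.ne_bot_iff.1 hJbot
  let u := Module.Basis.ofVectorSpace F A
  obtain ⟨c, rfl⟩ := TensorProduct.eq_repr_basis_right u x
  obtain ⟨i, hi⟩ : ∃ i, c i ≠ 0 := by
    by_contra! h
    exact hx0 (by simp [Finsupp.ext (f := c) (g := 0) h])
  refine ⟨c i, hi, fun v => ?_⟩
  obtain ⟨r, hr, hru⟩ := hA.exists_gradedMultAlg_apply_eq_of_linearIndependent hp hcentral
    (u.linearIndependent.comp ((↑) : c.support → _) Subtype.val_injective)
    (fun j => if (j : _) = i then v else 0)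
  have hrx : r.baseChange FF (c.sum fun j m => m ⊗ₜ u j) = c i ⊗ₜ v := by
    rw [map_finsuppSum, Finsupp.sum, Finset.sum_eq_single_of_mem i (by simpa)]
    · rw [LinearMap.baseChange_tmul]
      simpa using congr(c i ⊗ₜ $(hru ⟨i, by simpa⟩))
    · intro j hj hji
      rw [LinearMap.baseChange_tmul]
      simpa [hji] using congr(c j ⊗ₜ[F] $(hru ⟨j, hj⟩))
  exact hrx ▸ baseChange_apply_mem_of_mem_gradedMultAlg hJ hJp hr hxJ

theorem IsGradedSimple.baseChange (FF : Type*) [Field FF] [Algebra F FF]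
    (hA : IsGradedSimple F 𝒜) (hp : IsProjectionFamily 𝒜 p)
    (hcentral : ∀ φ ∈ centroid F (A := A) ⊓ endGrading F 𝒜 1, ∃ c : F, φ = c • 1) :
    IsGradedSimple FF fun g => (𝒜 g).baseChange FF := by
  obtain ⟨a, b, hab⟩ := hA.1
  refine ⟨⟨1 ⊗ₜ a, 1 ⊗ₜ b, fun h => hab (by simpa using h)⟩, fun J hJ hJhomog => ?_⟩
  refine or_iff_not_imp_left.2 fun hJbot => eq_top_iff.2 fun z _ => ?_
  obtain ⟨c, hc, hcJ⟩ := hA.exists_ne_zero_forall_tmul_mem hp hcentral hJ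
    ((hp.baseChange FF).isHomogSubmodule_iff.1 hJhomog) hJbot
  induction z with
  | zero => exact zero_mem J
  | add z z' hz hz' => exact J.add_mem (hz trivial) (hz' trivial)
  | tmul b v => simpa [TensorProduct.smul_tmul', hc] using J.smul_mem (b * c⁻¹) (hcJ v)

end BaseChange

section AmbientMultAlg

/-- Pairs of operators `(m, m')` with `m' ∘ f = f ∘ m`. They form an algebra, so a correspondence
of operators along `f` need only be established on generators. -/
def intertwiners {R M N : Type*} [CommSemiring R] [AddCommMonoid M] [Module R M] [AddCommMonoid N]
    [Module R N] (f : M →ₗ[R] N) : NonUnitalSubalgebra R (Module.End R M × Module.End R N) where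
  carrier := {m | ∀ x, m.2 (f x) = f (m.1 x)}
  add_mem' hm hn x := by simp [hm x, hn x]
  zero_mem' x := by simp
  mul_mem' hm hn x := by simp [hm (_ : M), hn x]
  smul_mem' c m hm x := by simp [hm x]

variable {R V V' : Type*} [CommRing R] [NonUnitalNonAssocRing V] [Module R V]
  [SMulCommClass R V V] [IsScalarTower R V V] [NonUnitalNonAssocRing V'] [Module R V']
  [SMulCommClass R V' V'] [IsScalarTower R V' V']

/-- The operators on the whole algebra `V` generated by the multiplications by elements of the
subalgebra `U`. Unlike `MultAlg R U` they act on `V`, so they can be compared for different `U`. -/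
def ambientMultAlg (U : NonUnitalSubalgebra R V) : NonUnitalSubalgebra R (Module.End R V) :=
  NonUnitalAlgebra.adjoin R (LinearMap.mulLeft R '' U ∪ LinearMap.mulRight R '' U)

theorem ambientMultAlg_mono {U W : NonUnitalSubalgebra R V} (h : U ≤ W) :
    ambientMultAlg U ≤ ambientMultAlg W :=
  NonUnitalAlgebra.adjoin_mono (Set.union_subset_union (Set.image_mono h) (Set.image_mono h))

theorem ambientMultAlg_bot : ambientMultAlg (⊥ : NonUnitalSubalgebra R V) = ⊥ := by
  refine eq_bot_iff.2 (NonUnitalAlgebra.adjoin_le ?_)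
  rintro _ (⟨x, hx, rfl⟩ | ⟨x, hx, rfl⟩) <;>
  · rw [SetLike.mem_coe, NonUnitalAlgebra.mem_bot] at hx
    simp [hx]

theorem exists_mem_ambientMultAlg_map (Ψ : V →ₙₐ[R] V') {U : NonUnitalSubalgebra R V}
    {m : Module.End R V} (hm : m ∈ ambientMultAlg U) :
    ∃ m' ∈ ambientMultAlg (U.map Ψ), ∀ v, m' (Ψ v) = Ψ (m v) := by
  suffices h : ambientMultAlg U ≤ (intertwiners (Ψ : V →ₗ[R] V') ⊓
      (ambientMultAlg (U.map Ψ)).comap (NonUnitalAlgHom.snd R _ _)).map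
        (NonUnitalAlgHom.fst R _ _) by
    obtain ⟨⟨_, m'⟩, ⟨hΨ, hm'⟩, rfl⟩ := h hm
    exact ⟨m', hm', hΨ⟩
  refine NonUnitalAlgebra.adjoin_le ?_
  rintro _ (⟨x, hx, rfl⟩ | ⟨x, hx, rfl⟩)
  · refine ⟨(LinearMap.mulLeft R x, LinearMap.mulLeft R (Ψ x)),
      ⟨fun v => (map_mul Ψ x v).symm, ?_⟩, rfl⟩
    exact NonUnitalAlgebra.subset_adjoin R (.inl ⟨_, ⟨x, hx, rfl⟩, rfl⟩)
  · refine ⟨(LinearMap.mulRight R x, LinearMap.mulRight R (Ψ x)),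
      ⟨fun v => (map_mul Ψ v x).symm, ?_⟩, rfl⟩
    exact NonUnitalAlgebra.subset_adjoin R (.inr ⟨_, ⟨x, hx, rfl⟩, rfl⟩)

theorem exists_mem_ambientMultAlg_of_map (Ψ : V →ₙₐ[R] V') {U : NonUnitalSubalgebra R V}
    {m' : Module.End R V'} (hm' : m' ∈ ambientMultAlg (U.map Ψ)) :
    ∃ m ∈ ambientMultAlg U, ∀ v, m' (Ψ v) = Ψ (m v) := by
  suffices h : ambientMultAlg (U.map Ψ) ≤ (intertwiners (Ψ : V →ₗ[R] V') ⊓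
      (ambientMultAlg U).comap (NonUnitalAlgHom.fst R _ _)).map
        (NonUnitalAlgHom.snd R _ _) by
    obtain ⟨⟨m, _⟩, ⟨hΨ, hm⟩, rfl⟩ := h hm'
    exact ⟨m, hm, hΨ⟩
  refine NonUnitalAlgebra.adjoin_le ?_
  rintro _ (⟨_, ⟨x, hx, rfl⟩, rfl⟩ | ⟨_, ⟨x, hx, rfl⟩, rfl⟩)
  · refine ⟨(LinearMap.mulLeft R x, _), ⟨fun v => (map_mul Ψ x v).symm, ?_⟩, rfl⟩
    exact NonUnitalAlgebra.subset_adjoin R (.inl ⟨x, hx, rfl⟩)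
  · refine ⟨(LinearMap.mulRight R x, _), ⟨fun v => (map_mul Ψ v x).symm, ?_⟩, rfl⟩
    exact NonUnitalAlgebra.subset_adjoin R (.inr ⟨x, hx, rfl⟩)

theorem multAlg_eq_ambientMultAlg_top {F V : Type*} [Field F] [NonUnitalNonAssocRing V]
    [Module F V] [SMulCommClass F V V] [IsScalarTower F V V] :
    MultAlg F (A := V) = ambientMultAlg ⊤ := by
  simp [MultAlg, ambientMultAlg]

theorem apply_mem_of_mem_ambientMultAlg {C : NonUnitalSubalgebra R V} {I N : Submodule R V}
    (hIN : I ≤ N) (hC : ∀ c ∈ C, ∀ x ∈ N, c * x ∈ I ∧ x * c ∈ I) {m : Module.End R V}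
    (hm : m ∈ ambientMultAlg C) {x : V} (hx : x ∈ N) : m x ∈ I := by
  induction hm using NonUnitalAlgebra.adjoin_induction generalizing x with
  | mem _ hm =>
    obtain ⟨c, hc, rfl⟩ | ⟨c, hc, rfl⟩ := hm
    · exact (hC c hc x hx).1
    · exact (hC c hc x hx).2
  | add m n _ _ hm hn => exact I.add_mem (hm hx) (hn hx)
  | zero => exact I.zero_mem
  | mul _ _ _ _ hm hn => exact hm (hIN (hn hx))
  | smul c m _ hm => exact I.smul_mem c (hm hx)

theorem apply_smul_of_mem_ambientMultAlg {S : Type*} [Monoid S] [DistribMulAction S V]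
    [SMulCommClass S R V] [SMulCommClass S V V] [IsScalarTower S V V]
    {C : NonUnitalSubalgebra R V} {m : Module.End R V} (hm : m ∈ ambientMultAlg C) (z : S) (x : V) :
    m (z • x) = z • m x := by
  induction hm using NonUnitalAlgebra.adjoin_induction generalizing x with
  | mem m hm =>
    obtain ⟨c, -, rfl⟩ | ⟨c, -, rfl⟩ := hm
    · exact mul_smul_comm z c x
    · exact smul_mul_assoc z x c
  | add m n _ _ hm hn => rw [LinearMap.add_apply, hm, hn, ← smul_add, LinearMap.add_apply]
  | zero => simp
  | mul m n _ _ hm hn => rw [Module.End.mul_apply, hn, hm, Module.End.mul_apply]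
  | smul c m _ hm => rw [LinearMap.smul_apply, hm, ← smul_comm, LinearMap.smul_apply]

end AmbientMultAlg

section MultScalars

variable {F FF V : Type*} [Field F] [Field FF] [Algebra F FF] [NonUnitalNonAssocRing V]
  [Module F V] [Module FF V] [IsScalarTower F FF V] [SMulCommClass F V V] [IsScalarTower F V V]
  {C : NonUnitalSubalgebra F V}

variable (FF) in
/-- The scalars of `FF` whose action on `V` is an operator of `ambientMultAlg C`; when `C` spans
`V` over `FF`, this is `Z(M(C))_e`, seen inside `FF`. -/
def multScalars (C : NonUnitalSubalgebra F V) : NonUnitalSubalgebra F FF :=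
  (ambientMultAlg C).comap (Algebra.lsmul F F V : FF →ₐ[F] Module.End F V)

theorem mem_multScalars {z : FF} :
    z ∈ multScalars FF C ↔ Algebra.lsmul F F V z ∈ ambientMultAlg C :=
  Iff.rfl

theorem multScalars_mono {U W : NonUnitalSubalgebra F V} (h : U ≤ W) :
    multScalars FF U ≤ multScalars FF W :=
  fun _ hz => ambientMultAlg_mono h hz

theorem mem_multScalars_of_forall_apply_eq_smul [SMulCommClass FF V V] [IsScalarTower FF V V]
    {m : Module.End F V} (hm : m ∈ ambientMultAlg C) {s : Set V} (hs : Submodule.span FF s = ⊤)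
    {z : FF} (hz : ∀ x ∈ s, m x = z • x) : z ∈ multScalars FF C := by
  let m' : V →ₗ[FF] V := { m with map_smul' := apply_smul_of_mem_ambientMultAlg hm }
  have hm' : m' = LinearMap.lsmul FF V z := LinearMap.ext_on hs hz
  have : Algebra.lsmul F F V z = m := LinearMap.ext fun x => congr($hm' x).symm
  rwa [mem_multScalars, this]

theorem exists_ambientMultAlg_apply_eq {s : Module.End F C} (hs : s ∈ MultAlg F) :
    ∃ m ∈ ambientMultAlg C, ∀ x : C, m x = s x := by
  rw [multAlg_eq_ambientMultAlg_top] at hs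
  obtain ⟨m, hm, hms⟩ := exists_mem_ambientMultAlg_map (NonUnitalSubalgebraClass.subtype C) hs
  rw [NonUnitalAlgebra.map_top, NonUnitalSubalgebra.range_val] at hm
  exact ⟨m, hm, hms⟩

theorem exists_multAlg_apply_eq {m : Module.End F V} (hm : m ∈ ambientMultAlg C) :
    ∃ s ∈ MultAlg F (A := C), ∀ x : C, (s x : V) = m x := by
  rw [← NonUnitalSubalgebra.range_val C, ← NonUnitalAlgebra.map_top] at hm
  obtain ⟨s, hs, hsm⟩ := exists_mem_ambientMultAlg_of_map (NonUnitalSubalgebraClass.subtype C) hm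
  rw [← multAlg_eq_ambientMultAlg_top] at hs
  exact ⟨s, hs, fun x => (hsm x).symm⟩

theorem infinite_of_one_notMem {S : NonUnitalSubalgebra F FF} (hone : (1 : FF) ∉ S) {z : FF}
    (hz : z ∈ S) (hz0 : z ≠ 0) : (S : Set FF).Infinite := by
  intro hfin
  have : Finite S := hfin
  have hinj : Function.Injective fun w : S => (⟨z * w, S.mul_mem hz w.2⟩ : S) := fun w w' h =>
    Subtype.ext (mul_left_cancel₀ hz0 congr(($h : FF)))
  obtain ⟨w, hw⟩ := Finite.surjective_of_injective hinj ⟨z, hz⟩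
  have hw1 : (w : FF) = 1 := mul_left_cancel₀ hz0 (congr(($hw : FF)).trans (mul_one z).symm)
  exact hone (hw1 ▸ w.2)

end MultScalars

section Localization

variable {F G FF A : Type*} [Field F] [CommGroup G] [Field FF] [Algebra F FF]
  [NonUnitalNonAssocRing A] [Module F A] [SMulCommClass F A A] [IsScalarTower F A A]
  {C : NonUnitalSubalgebra F (FF ⊗[F] A)}

theorem exists_centerMultE_apply_eq_smul (𝒜 : G → Submodule F A) {z : FF}
    (hz : z ∈ multScalars FF C) :
    ∃ s ∈ centerMultE F FF 𝒜 C, ∀ x : C, (s x : FF ⊗[F] A) = z • (x : FF ⊗[F] A) := by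
  obtain ⟨s, hs, hsz⟩ := exists_multAlg_apply_eq hz
  have hsz (x : C) : (s x : FF ⊗[F] A) = z • (x : FF ⊗[F] A) := hsz x
  refine ⟨s, ⟨hs, fun s' hs' => ?_, fun g x hx => ?_⟩, hsz⟩
  · obtain ⟨m', hm', hms'⟩ := exists_ambientMultAlg_apply_eq hs'
    ext x
    rw [Module.End.mul_apply, hsz, Module.End.mul_apply, ← hms', ← hms', hsz,
      apply_smul_of_mem_ambientMultAlg hm']
  · rw [one_mul]
    exact (hsz x ▸ ((𝒜 g).baseChange FF).smul_mem z hx : (s x : FF ⊗[F] A) ∈ _)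

theorem mem_multScalars_of_mem_centerMultE {𝒜 : G → Submodule F A}
    (hC : Submodule.span FF (C : Set (FF ⊗[F] A)) = ⊤) {s : Module.End F C}
    (hs : s ∈ centerMultE F FF 𝒜 C) {z : FF}
    (hz : ∀ x : C, (s x : FF ⊗[F] A) = z • (x : FF ⊗[F] A)) : z ∈ multScalars FF C := by
  obtain ⟨m, hm, hms⟩ := exists_ambientMultAlg_apply_eq hs.1
  exact mem_multScalars_of_forall_apply_eq_smul hm hC
    fun x hx => (hms ⟨x, hx⟩).trans (hz ⟨x, hx⟩)

theorem exists_centerMultE_inv_smul_iff [Nontrivial A] {𝒜 : G → Submodule F A}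
    (hC : Submodule.span FF (C : Set (FF ⊗[F] A)) = ⊤) {θ : Module.End F C → FF}
    (hθ : ∀ s ∈ centerMultE F FF 𝒜 C, ∀ x : C, (s x : FF ⊗[F] A) = θ s • (x : FF ⊗[F] A))
    {y : FF ⊗[F] A} :
    (∃ s ∈ centerMultE F FF 𝒜 C, s ≠ 0 ∧ ∃ x ∈ C, y = (θ s)⁻¹ • x) ↔
      ∃ z ∈ multScalars FF C, z ≠ 0 ∧ ∃ x ∈ C, y = z⁻¹ • x := by
  constructor
  · rintro ⟨s, hs, hs0, x, hx, rfl⟩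
    refine ⟨θ s, mem_multScalars_of_mem_centerMultE hC hs (hθ s hs), fun h0 => hs0 ?_, x, hx, rfl⟩
    ext x
    rw [hθ s hs, h0, zero_smul, LinearMap.zero_apply, ZeroMemClass.coe_zero]
  · rintro ⟨z, hz, hz0, x, hx, rfl⟩
    obtain ⟨s, hs, hsz⟩ := exists_centerMultE_apply_eq_smul 𝒜 hz
    obtain ⟨c, hc, hc0⟩ : ∃ c ∈ C, c ≠ 0 := by
      by_contra! h
      exact bot_ne_top ((Submodule.span_eq_bot.2 h).symm.trans hC)
    have hzθ : z = θ s :=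
      smul_left_injective FF hc0 ((hsz ⟨c, hc⟩).symm.trans (hθ s hs ⟨c, hc⟩))
    refine ⟨s, hs, ?_, x, hx, hzθ ▸ rfl⟩
    rintro rfl
    exact smul_ne_zero hz0 hc0 (hsz ⟨c, hc⟩).symm

end Localization

section Specialization

variable {F P Q FF A : Type*} [Field F] [CommRing P] [Algebra F P] [CommRing Q] [Algebra F Q]
  [Field FF] [Algebra F FF] [NonUnitalNonAssocRing A] [Module F A] [SMulCommClass F A A]
  [IsScalarTower F A A]

/-- The homomorphism `P ⊗ A → Q ⊗ A` that specializes the coefficients along `σ : P → Q`. -/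
def specialize (σ : P →ₐ[F] Q) : P ⊗[F] A →ₙₐ[F] Q ⊗[F] A where
  __ := LinearMap.rTensor A σ.toLinearMap
  map_zero' := map_zero _
  map_mul' x y := by
    change LinearMap.rTensor A σ.toLinearMap (x * y) =
      LinearMap.rTensor A σ.toLinearMap x * LinearMap.rTensor A σ.toLinearMap y
    induction x with
    | zero => simp
    | add x x' hx hx' => rw [add_mul, map_add, hx, hx', map_add, add_mul]
    | tmul a u =>
      induction y with
      | zero => simp
      | add y y' hy hy' => rw [mul_add, map_add, hy, hy', map_add, mul_add]
      | tmul b v => simp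

@[simp]
theorem specialize_tmul (σ : P →ₐ[F] Q) (a : P) (u : A) :
    specialize σ (a ⊗ₜ[F] u) = σ a ⊗ₜ u :=
  rfl

theorem specialize_smul (σ : P →ₐ[F] Q) (a : P) (x : P ⊗[F] A) :
    specialize σ (a • x) = σ a • specialize σ x := by
  induction x with
  | zero => simp
  | add x y hx hy => rw [smul_add, map_add, hx, hy, map_add, smul_add]
  | tmul b u => simp [TensorProduct.smul_tmul']

theorem specialize_injective {σ : P →ₐ[F] Q} (hσ : Function.Injective σ) :
    Function.Injective (specialize σ : P ⊗[F] A →ₙₐ[F] Q ⊗[F] A) :=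
  Module.Flat.rTensor_preserves_injective_linearMap σ.toLinearMap hσ

theorem span_range_one_tmul (F FF A : Type*) [CommSemiring F] [CommSemiring FF] [Algebra F FF]
    [AddCommMonoid A] [Module F A] :
    Submodule.span FF (Set.range fun a : A => (1 : FF) ⊗ₜ[F] a) = ⊤ := by
  rw [← Submodule.baseChange_top, Submodule.baseChange_eq_span, Submodule.map_top]
  rfl

theorem dual_baseChange_specialize (σ : P →ₐ[F] Q) (ε : Module.Dual F A) (x : P ⊗[F] A) :
    ε.baseChange Q (specialize σ x) = σ (ε.baseChange P x) := by
  induction x with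
  | zero => simp
  | add x y hx hy => simp only [map_add, hx, hy]
  | tmul b u => simp

theorem exists_forall_apply_eq_smul [Nontrivial A] {ι : P →ₐ[F] FF} (hι : Function.Injective ι)
    {z : FF} {w : Module.End F (P ⊗[F] A)}
    (hw : ∀ v, specialize ι (w v) = z • specialize ι v) :
    ∃ c : P, ι c = z ∧ ∀ v, w v = c • v := by
  obtain ⟨a, ha⟩ := exists_ne (0 : A)
  obtain ⟨ε, hε⟩ := Module.Projective.exists_dual_eq_one F ha
  let c : P := ε.baseChange P (w (1 ⊗ₜ a))
  have hc : ι c = z := by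
    simp [c, ← dual_baseChange_specialize, hw, hε]
  exact ⟨c, hc, fun v => specialize_injective hι (by rw [hw, specialize_smul, hc])⟩

/-- A scalar operator over `FF` comes from an operator over `P`, which is forced to be scalar there
and therefore stays scalar under every other specialization. -/
theorem exists_forall_mem_multScalars_specialize [Nontrivial A] {ι : P →ₐ[F] FF}
    (hι : Function.Injective ι) {U : NonUnitalSubalgebra F (P ⊗[F] A)} {z : FF}
    (hz : z ∈ multScalars FF (U.map (specialize ι))) :
    ∃ c : P, ι c = z ∧ ∀ σ : P →ₐ[F] FF, σ c ∈ multScalars FF (U.map (specialize σ)) := by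
  obtain ⟨w, hw, hwz⟩ := exists_mem_ambientMultAlg_of_map (specialize ι) (U := U)
    (m' := Algebra.lsmul F F (FF ⊗[F] A) z) (mem_multScalars.1 hz)
  obtain ⟨c, hc, hwc⟩ := exists_forall_apply_eq_smul hι (w := w) (z := z) fun v => by
    rw [← hwz, Algebra.lsmul_coe]
  refine ⟨c, hc, fun σ => ?_⟩
  obtain ⟨m, hm, hmw⟩ := exists_mem_ambientMultAlg_map (specialize σ) hw
  refine mem_multScalars_of_forall_apply_eq_smul hm (span_range_one_tmul F FF A) ?_
  rintro _ ⟨a, rfl⟩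
  simpa [hwc, specialize_smul] using hmw (1 ⊗ₜ a)

end Specialization

section ZariskiDensity

theorem exists_aeval_ne_zero_of_span_eq_top {F FF V τ ρ : Type*} [CommSemiring F] [Field FF]
    [Algebra F FF] [AddCommGroup V] [Module FF V] (c : MvPolynomial τ F) (row : τ → ρ)
    (κ : τ → Module.Dual FF V) {S : Set FF} (hS : S.Infinite) {W : AddSubmonoid V}
    (hSW : ∀ s ∈ S, ∀ w ∈ W, s • w ∈ W) (hW : Submodule.span FF (W : Set V) = ⊤) {x : ρ → V}
    (hx : MvPolynomial.aeval (fun t => κ t (x (row t))) c ≠ 0) :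
    ∃ w : ρ → V, (∀ k, w k ∈ W) ∧ MvPolynomial.aeval (fun t => κ t (w (row t))) c ≠ 0 := by
  have hspan (k : ρ) : x k ∈ Submodule.span FF (W : Set V) := hW ▸ Submodule.mem_top
  choose n coeff ω hω using fun k => Submodule.mem_span_set'.1 (hspan k)
  let comb (s : (Σ k, Fin (n k)) → FF) (k : ρ) : V := ∑ l, s ⟨k, l⟩ • (ω k l : V)
  let q : MvPolynomial (Σ k, Fin (n k)) FF := MvPolynomial.aeval
    (fun t => ∑ l, κ t (ω (row t) l) • MvPolynomial.X ⟨row t, l⟩) c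
  have hq (s : (Σ k, Fin (n k)) → FF) :
      MvPolynomial.eval s q = MvPolynomial.aeval (fun t => κ t (comb s (row t))) c := by
    rw [← MvPolynomial.aeval_eq_eval, ← AlgHom.restrictScalars_apply F,
      MvPolynomial.comp_aeval_apply]
    congr! 3 with t
    simp [comb, mul_comm]
  obtain ⟨s, hsS, hs⟩ : ∃ s ∈ Set.pi .univ fun _ => S, MvPolynomial.eval s q ≠ 0 := by
    by_contra! h
    have hq0 : q = 0 := MvPolynomial.funext_set _ (fun _ => hS) (by simpa using h)
    have hcomb : comb (fun i => coeff i.1 i.2) = x := funext hω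
    refine hx ?_
    rw [← hcomb, ← hq fun i => coeff i.1 i.2, hq0, map_zero]
  exact ⟨comb s, fun k => sum_mem fun l _ => hSW _ (hsS _ trivial) _ (ω k l).2, hq s ▸ hs⟩

end ZariskiDensity

section GenericElements

theorem IsProjectionFamily.apply_mem_adjoin {R K G V : Type*} [CommSemiring R] [Semiring K]
    [Mul G] [NonUnitalNonAssocSemiring V] [Module R V] [IsScalarTower R V V]
    [SMulCommClass R V V] [Module K V] [SMul R K] [IsScalarTower R K V] {𝒜 : G → Submodule K V}
    {p : G → Module.End K V} (hp : IsProjectionFamily 𝒜 p)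
    (hmul : ∀ g h, ∀ a ∈ 𝒜 g, ∀ b ∈ 𝒜 h, a * b ∈ 𝒜 (g * h)) {s : Set V}
    (hs : ∀ x ∈ s, ∃ g, x ∈ 𝒜 g) {x : V} (hx : x ∈ NonUnitalAlgebra.adjoin R s) (g : G) :
    p g x ∈ NonUnitalAlgebra.adjoin R s := by
  have apply_mem_of_homogeneous {h : G} {x : V} (hxh : x ∈ 𝒜 h)
      (hx : x ∈ NonUnitalAlgebra.adjoin R s) (g : G) : p g x ∈ NonUnitalAlgebra.adjoin R s := by
    obtain rfl | hne := eq_or_ne h g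
    · rwa [hp.apply_of_mem hxh]
    · rw [hp.apply_of_mem_of_ne hne hxh]
      exact zero_mem _
  induction hx using NonUnitalAlgebra.adjoin_induction generalizing g with
  | mem x hx =>
    obtain ⟨h, hxh⟩ := hs x hx
    exact apply_mem_of_homogeneous hxh (NonUnitalAlgebra.subset_adjoin R hx) g
  | add x y _ _ hx hy => rw [map_add]; exact add_mem (hx g) (hy g)
  | zero => rw [map_zero]; exact zero_mem _
  | smul r x _ hx => rw [LinearMap.map_smul_of_tower]; exact SMulMemClass.smul_mem r (hx g)
  | mul x y _ _ hx hy =>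
    obtain ⟨S, hS⟩ := hp.exists_finset_sum_apply_eq x
    obtain ⟨T, hT⟩ := hp.exists_finset_sum_apply_eq y
    rw [← hS, ← hT, Finset.sum_mul_sum, map_sum]
    refine sum_mem fun a _ => map_sum (p g) _ T ▸ sum_mem fun b _ => ?_
    exact apply_mem_of_homogeneous (hmul _ _ _ (hp.apply_mem a x) _ (hp.apply_mem b y))
      (mul_mem (hx a) (hy b)) g

theorem mul_mem_baseChange {F FF G A : Type*} [Field F] [Field FF] [Algebra F FF] [Mul G]
    [NonUnitalNonAssocRing A] [Module F A] [SMulCommClass F A A] [IsScalarTower F A A]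
    {𝒜 : G → Submodule F A} (hmul : ∀ g h, ∀ a ∈ 𝒜 g, ∀ b ∈ 𝒜 h, a * b ∈ 𝒜 (g * h))
    (g h : G) : ∀ x ∈ (𝒜 g).baseChange FF, ∀ y ∈ (𝒜 h).baseChange FF,
      x * y ∈ (𝒜 (g * h)).baseChange FF := by
  rintro _ ⟨x, rfl⟩ _ ⟨y, rfl⟩
  induction x with
  | zero => simp
  | add x x' hx hx' => rw [map_add, add_mul]; exact add_mem hx hx'
  | tmul a u =>
    induction y with
    | zero => simp
    | add y y' hy hy' => rw [map_add, mul_add]; exact add_mem hy hy'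
    | tmul b v =>
      simpa using Submodule.tmul_mem_baseChange_of_mem (a * b) (hmul g h u u.2 v v.2)

variable {F G FF A : Type*} [Field F] [Field FF] [Algebra F FF]
  [NonUnitalNonAssocRing A] [Module F A] {𝒜 : G → Submodule F A} {p : G → Module.End F A}
  {nU : G → ℕ} (bU : ∀ g : G, Module.Basis (Fin (nU g)) F (𝒜 g))

/-- The coordinate functionals of `A` with respect to the bases of the homogeneous components,
extended by zero along the projections. -/
noncomputable def IsProjectionFamily.coord (hp : IsProjectionFamily 𝒜 p) (g : G) (j : Fin (nU g)) :
    Module.Dual F A :=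
  (bU g).coord j ∘ₗ (p g).codRestrict (𝒜 g) (hp.apply_mem g)

theorem IsProjectionFamily.coord_basis (hp : IsProjectionFamily 𝒜 p) (g : G) (i j : Fin (nU g)) :
    hp.coord bU g j (bU g i) = if i = j then 1 else 0 := by
  have hpi : (p g).codRestrict (𝒜 g) (hp.apply_mem g) (bU g i) = bU g i :=
    Subtype.ext (hp.apply_of_mem (bU g i).2)
  simp [coord, hpi, Finsupp.single_apply]

theorem IsProjectionFamily.sum_baseChange_coord_tmul (hp : IsProjectionFamily 𝒜 p) (g : G)
    (v : FF ⊗[F] A) :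
    ∑ j, (hp.coord bU g j).baseChange FF v ⊗ₜ[F] (bU g j : A) = (p g).baseChange FF v := by
  induction v with
  | zero => simp
  | add v w hv hw => simp only [map_add, TensorProduct.add_tmul, Finset.sum_add_distrib, hv, hw]
  | tmul a u =>
    have hsum : ∑ j, hp.coord bU g j u • (bU g j : A) = p g u := by
      have := congr((𝒜 g).subtype $((bU g).sum_repr ⟨p g u, hp.apply_mem g u⟩))
      rwa [map_sum] at this
    simp [← hsum, TensorProduct.tmul_sum, TensorProduct.smul_tmul]

variable (F FF) in
/-- The coefficient `t_{ij}^g`, indexed by `⟨g, i, j⟩`, as an element of `FF`. -/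
noncomputable def genericCoeff [Algebra (MvPolynomial (G × ℕ × ℕ) F) FF]
    (t : Σ g, Fin (nU g) × Fin (nU g)) : FF :=
  algebraMap (MvPolynomial (G × ℕ × ℕ) F) FF (MvPolynomial.X (t.1, (t.2.1 : ℕ), (t.2.2 : ℕ)))

/-- The generic element `y_i^g`, indexed by `⟨g, i⟩`, with polynomial coefficients. Only the
indeterminates `t_{ij}^g` with `i, j < nU g` are kept, so that a homogeneous substitution for the
generic elements determines a specialization of all the indeterminates. -/
noncomputable def polyGenericElem (k : Σ g, Fin (nU g)) :
    MvPolynomial (Σ g, Fin (nU g) × Fin (nU g)) F ⊗[F] A :=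
  ∑ j, MvPolynomial.X ⟨k.1, k.2, j⟩ ⊗ₜ (bU k.1 j : A)

section Span

variable [Algebra (MvPolynomial (G × ℕ × ℕ) F) FF] [IsScalarTower F (MvPolynomial (G × ℕ × ℕ) F) FF]

theorem algebraicIndependent_genericCoeff
    (hinj : Function.Injective (algebraMap (MvPolynomial (G × ℕ × ℕ) F) FF)) :
    AlgebraicIndependent F (genericCoeff F FF (nU := nU)) := by
  have he : Function.Injective
      fun t : Σ g, Fin (nU g) × Fin (nU g) => (t.1, (t.2.1 : ℕ), (t.2.2 : ℕ)) := by
    rintro ⟨g, i, j⟩ ⟨h, k, l⟩ heq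
    obtain ⟨rfl, hik, hjl⟩ := by simpa using heq
    rw [Fin.ext hik, Fin.ext hjl]
  exact ((MvPolynomial.algebraicIndependent_X (G × ℕ × ℕ) F).comp _ he).map'
    (f := IsScalarTower.toAlgHom F (MvPolynomial (G × ℕ × ℕ) F) FF) hinj

theorem isUnit_genericCoeff_matrix
    (hinj : Function.Injective (algebraMap (MvPolynomial (G × ℕ × ℕ) F) FF)) (g : G) :
    IsUnit (Matrix.of fun i j => genericCoeff F FF (nU := nU) ⟨g, i, j⟩) := by
  let coeff (t : Fin (nU g) × Fin (nU g)) : FF := genericCoeff F FF (nU := nU) ⟨g, t⟩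
  have hind : AlgebraicIndependent F coeff :=
    (algebraicIndependent_genericCoeff hinj).comp _ sigma_mk_injective
  have hmap : (Matrix.of fun i j => genericCoeff F FF (nU := nU) ⟨g, i, j⟩) =
      (MvPolynomial.aeval coeff).mapMatrix (Matrix.mvPolynomialX (Fin (nU g)) (Fin (nU g)) F) := by
    ext i j
    simp [coeff]
  rw [Matrix.isUnit_iff_isUnit_det, isUnit_iff_ne_zero, hmap, ← AlgHom.map_det]
  exact (map_ne_zero_iff _ hind).2 (Matrix.det_mvPolynomialX_ne_zero _ F)

theorem one_tmul_basis_mem_span_genericElems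
    (hinj : Function.Injective (algebraMap (MvPolynomial (G × ℕ × ℕ) F) FF)) (g : G)
    (j : Fin (nU g)) :
    (1 : FF) ⊗ₜ[F] (bU g j : A) ∈ Submodule.span FF (genericElems F FF 𝒜 nU bU) := by
  obtain ⟨w, hw⟩ := Matrix.vecMul_surjective_iff_isUnit.2 (isUnit_genericCoeff_matrix hinj g)
    (Pi.single j 1)
  have hsum : ∑ i, w i • ∑ l, genericCoeff F FF ⟨g, i, l⟩ ⊗ₜ[F] (bU g l : A) = 1 ⊗ₜ (bU g j : A) :=
    calc
      _ = ∑ l, (∑ i, w i * genericCoeff F FF ⟨g, i, l⟩) ⊗ₜ[F] (bU g l : A) := by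
        simp_rw [Finset.smul_sum, TensorProduct.smul_tmul', TensorProduct.sum_tmul, smul_eq_mul]
        exact Finset.sum_comm
      _ = ∑ l, (Pi.single j 1 : Fin (nU g) → FF) l ⊗ₜ[F] (bU g l : A) := by rw [← hw]; rfl
      _ = 1 ⊗ₜ (bU g j : A) := by simp [Pi.single_apply, ite_tmul]
  rw [← hsum]
  exact sum_mem fun i _ => Submodule.smul_mem _ _ (Submodule.subset_span ⟨g, i, rfl⟩)

end Span

variable [SMulCommClass F A A] [IsScalarTower F A A]

/-- The algebra generated by the generic elements with polynomial coefficients. -/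
noncomputable def polyGenericAlg :
    NonUnitalSubalgebra F (MvPolynomial (Σ g, Fin (nU g) × Fin (nU g)) F ⊗[F] A) :=
  NonUnitalAlgebra.adjoin F (Set.range (polyGenericElem bU))

theorem map_specialize_polyGenericAlg_le
    (σ : MvPolynomial (Σ g, Fin (nU g) × Fin (nU g)) F →ₐ[F] FF)
    {W : NonUnitalSubalgebra F (FF ⊗[F] A)}
    (hW : ∀ k, specialize σ (polyGenericElem bU k) ∈ W) :
    (polyGenericAlg bU).map (specialize σ) ≤ W := by
  rw [polyGenericAlg, NonUnitalAlgHom.map_adjoin, NonUnitalAlgebra.adjoin_le_iff]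
  rintro _ ⟨_, ⟨k, rfl⟩, rfl⟩
  exact hW k

theorem specialize_coord_polyGenericElem (hp : IsProjectionFamily 𝒜 p)
    (v : (Σ g, Fin (nU g)) → FF ⊗[F] A) (k : Σ g, Fin (nU g)) :
    specialize (MvPolynomial.aeval fun t : Σ g, Fin (nU g) × Fin (nU g) =>
      (hp.coord bU t.1 t.2.2).baseChange FF (v ⟨t.1, t.2.1⟩)) (polyGenericElem bU k) =
        (p k.1).baseChange FF (v k) := by
  simp [polyGenericElem, hp.sum_baseChange_coord_tmul]

variable [Algebra (MvPolynomial (G × ℕ × ℕ) F) FF]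

theorem map_specialize_polyGenericAlg :
    (polyGenericAlg bU).map (specialize (MvPolynomial.aeval (genericCoeff F FF))) =
      genericAlg F FF 𝒜 nU bU := by
  rw [polyGenericAlg, NonUnitalAlgHom.map_adjoin, genericAlg]
  congr 1
  ext x
  simp [genericElems, polyGenericElem, genericCoeff, eq_comm]

theorem baseChange_apply_mem_genericAlg [Mul G] (hp : IsProjectionFamily 𝒜 p)
    (hmul : ∀ g h, ∀ a ∈ 𝒜 g, ∀ b ∈ 𝒜 h, a * b ∈ 𝒜 (g * h)) (g : G) :
    ∀ x ∈ genericAlg F FF 𝒜 nU bU, (p g).baseChange FF x ∈ genericAlg F FF 𝒜 nU bU := by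
  refine fun x hx => (hp.baseChange FF).apply_mem_adjoin (mul_mem_baseChange hmul) ?_ hx g
  rintro _ ⟨h, i, rfl⟩
  exact ⟨h, sum_mem fun j _ => Submodule.tmul_mem_baseChange_of_mem _ (bU h j).2⟩

variable [IsScalarTower F (MvPolynomial (G × ℕ × ℕ) F) FF]

theorem span_genericAlg_eq_top
    (hinj : Function.Injective (algebraMap (MvPolynomial (G × ℕ × ℕ) F) FF))
    (hp : IsProjectionFamily 𝒜 p) :
    Submodule.span FF (genericAlg F FF 𝒜 nU bU : Set (FF ⊗[F] A)) = ⊤ := by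
  suffices h : Submodule.span FF (genericElems F FF 𝒜 nU bU) = ⊤ from
    top_unique (h.ge.trans (Submodule.span_mono (NonUnitalAlgebra.subset_adjoin F)))
  refine top_unique ((hp.baseChange FF).iSup_eq_top.ge.trans (iSup_le fun g => ?_))
  have hspan : Submodule.span F (Set.range fun j => (bU g j : A)) = 𝒜 g := by
    have := congr(Submodule.map (𝒜 g).subtype $((bU g).span_eq))
    rwa [Submodule.map_span, ← Set.range_comp, Submodule.map_subtype_top] at this
  rw [← hspan, Submodule.baseChange_span, Submodule.span_le]
  rintro _ ⟨_, ⟨j, rfl⟩, rfl⟩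
  exact one_tmul_basis_mem_span_genericElems bU hinj g j

theorem one_notMem_multScalars_genericAlg [Nontrivial A]
    (hinj : Function.Injective (algebraMap (MvPolynomial (G × ℕ × ℕ) F) FF)) :
    (1 : FF) ∉ multScalars FF (genericAlg F FF 𝒜 nU bU) := by
  intro hone
  rw [← map_specialize_polyGenericAlg] at hone
  obtain ⟨c, hc, hcσ⟩ := exists_forall_mem_multScalars_specialize
    (algebraicIndependent_genericCoeff hinj) hone
  obtain rfl : c = 1 := algebraicIndependent_genericCoeff hinj (hc.trans (map_one _).symm)
  have hbot : (polyGenericAlg bU).map (specialize (MvPolynomial.aeval fun _ => (0 : FF))) ≤ ⊥ :=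
    map_specialize_polyGenericAlg_le bU _ fun k => by simp [polyGenericElem]
  have hmem := multScalars_mono hbot (hcσ _)
  rw [map_one, mem_multScalars, ambientMultAlg_bot, NonUnitalAlgebra.mem_bot, map_one] at hmem
  exact one_ne_zero hmem

/-- The nonzero scalar is obtained by substituting elements of `W` for the generic elements. -/
theorem exists_ne_zero_mem_multScalars_of_span_eq_top [Nontrivial A]
    (hinj : Function.Injective (algebraMap (MvPolynomial (G × ℕ × ℕ) F) FF))
    (hp : IsProjectionFamily 𝒜 p) {z : FF} (hz : z ∈ multScalars FF (genericAlg F FF 𝒜 nU bU))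
    (hz0 : z ≠ 0) {W : NonUnitalSubalgebra F (FF ⊗[F] A)}
    (hW : Submodule.span FF (W : Set (FF ⊗[F] A)) = ⊤)
    (hWp : ∀ g, ∀ w ∈ W, (p g).baseChange FF w ∈ W)
    (hWs : ∀ s ∈ multScalars FF (genericAlg F FF 𝒜 nU bU), ∀ w ∈ W, s • w ∈ W) :
    ∃ z' ∈ multScalars FF W, z' ≠ 0 := by
  have hS := infinite_of_one_notMem (one_notMem_multScalars_genericAlg bU hinj) hz hz0
  rw [← map_specialize_polyGenericAlg] at hz
  obtain ⟨c, rfl, hcσ⟩ := exists_forall_mem_multScalars_specialize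
    (algebraicIndependent_genericCoeff hinj) hz
  have hcoord (t : Σ g, Fin (nU g) × Fin (nU g)) : (hp.coord bU t.1 t.2.2).baseChange FF
      (∑ l, genericCoeff F FF ⟨t.1, t.2.1, l⟩ ⊗ₜ (bU t.1 l : A)) = genericCoeff F FF t := by
    simp [hp.coord_basis]
  obtain ⟨w, hw, hwc⟩ := exists_aeval_ne_zero_of_span_eq_top c
    (fun t => (⟨t.1, t.2.1⟩ : Σ g, Fin (nU g))) (fun t => (hp.coord bU t.1 t.2.2).baseChange FF) hS
    (W := W.toAddSubmonoid) hWs hW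
    (x := fun k => ∑ l, genericCoeff F FF ⟨k.1, k.2, l⟩ ⊗ₜ (bU k.1 l : A))
    (by simpa only [hcoord] using hz0)
  refine ⟨_, multScalars_mono (map_specialize_polyGenericAlg_le bU _ fun k => ?_) (hcσ _), hwc⟩
  rw [specialize_coord_polyGenericElem]
  exact hWp k.1 (w k) (hw k)

end GenericElements

section CentralLocalization

variable {F FF V : Type*} [Field F] [Field FF] [Algebra F FF] [NonUnitalNonAssocRing V]
  [Module F V] [Module FF V] [IsScalarTower F FF V] [SMulCommClass F V V] [IsScalarTower F V V]
  {C L : NonUnitalSubalgebra F V}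

variable (FF) in
/-- `L` is the localization `S⁻¹C` inside `V`, where `S` consists of the nonzero elements of
`multScalars FF C`. -/
def IsCentralLocalization (C L : NonUnitalSubalgebra F V) : Prop :=
  ∀ y, y ∈ L ↔ ∃ z ∈ multScalars FF C, z ≠ 0 ∧ ∃ x ∈ C, y = z⁻¹ • x

theorem smul_mem_of_mem_multScalars {I : Submodule F V}
    (hI : ∀ c ∈ C, ∀ x ∈ I, c * x ∈ I ∧ x * c ∈ I) {z : FF} (hz : z ∈ multScalars FF C) {x : V}
    (hx : x ∈ I) : z • x ∈ I :=
  apply_mem_of_mem_ambientMultAlg le_rfl hI hz hx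

theorem smul_mem_self_of_mem_multScalars {z : FF} (hz : z ∈ multScalars FF C) {x : V}
    (hx : x ∈ C) : z • x ∈ C :=
  smul_mem_of_mem_multScalars (I := C.toSubmodule)
    (fun _ hc _ hx => ⟨C.mul_mem hc hx, C.mul_mem hx hc⟩) hz hx

namespace IsCentralLocalization

theorem exists_ne_zero_mem_multScalars (hL : IsCentralLocalization FF C L) :
    ∃ z ∈ multScalars FF C, z ≠ 0 := by
  obtain ⟨z, hz, hz0, -⟩ := (hL 0).1 L.zero_mem
  exact ⟨z, hz, hz0⟩

theorem inv_smul_mem (hL : IsCentralLocalization FF C L) {z : FF} (hz : z ∈ multScalars FF C)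
    (hz0 : z ≠ 0) {y : V} (hy : y ∈ L) : z⁻¹ • y ∈ L := by
  obtain ⟨w, hw, hw0, x, hx, rfl⟩ := (hL y).1 hy
  exact (hL _).2 ⟨w * z, mul_mem hw hz, mul_ne_zero hw0 hz0, x, hx, by rw [smul_smul, mul_inv_rev]⟩

theorem le (hL : IsCentralLocalization FF C L) : C ≤ L := by
  intro x hx
  obtain ⟨z, hz, hz0⟩ := hL.exists_ne_zero_mem_multScalars
  exact (hL x).2
    ⟨z, hz, hz0, z • x, smul_mem_self_of_mem_multScalars hz hx, (inv_smul_smul₀ hz0 x).symm⟩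

theorem exists_smul_mem (hL : IsCentralLocalization FF C L) {y : V} (hy : y ∈ L) :
    ∃ z ∈ multScalars FF C, z ≠ 0 ∧ z • y ∈ C := by
  obtain ⟨z, hz, hz0, x, hx, rfl⟩ := (hL y).1 hy
  exact ⟨z, hz, hz0, by rwa [smul_inv_smul₀ hz0]⟩

theorem apply_mem (hL : IsCentralLocalization FF C L) {f : Module.End FF V}
    (hf : ∀ x ∈ C, f x ∈ C) {y : V} (hy : y ∈ L) : f y ∈ L := by
  obtain ⟨z, hz, hz0, x, hx, rfl⟩ := (hL y).1 hy
  exact (hL _).2 ⟨z, hz, hz0, f x, hf x hx, map_smul f _ x⟩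

end IsCentralLocalization

end CentralLocalization

section LocalizationGradedSimple

theorem mul_mem_span_of_forall_mul_mem {K V : Type*} [CommSemiring K] [NonUnitalNonAssocSemiring V]
    [Module K V] [SMulCommClass K V V] [IsScalarTower K V V] {s t u : Set V}
    (h : ∀ x ∈ s, ∀ y ∈ t, x * y ∈ u) {x y : V} (hx : x ∈ Submodule.span K s)
    (hy : y ∈ Submodule.span K t) : x * y ∈ Submodule.span K u := by
  have hxy := Submodule.apply_mem_map₂ (LinearMap.mul K V) hx hy
  rw [Submodule.map₂_span_span] at hxy
  exact Submodule.span_mono (Set.image2_subset_iff.2 h) hxy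

theorem isMulIdeal_span {K V : Type*} [Field K] [NonUnitalNonAssocSemiring V] [Module K V]
    [SMulCommClass K V V] [IsScalarTower K V V] {s t : Set V} (hs : Submodule.span K s = ⊤)
    (hst : ∀ c ∈ s, ∀ x ∈ t, c * x ∈ t ∧ x * c ∈ t) : IsMulIdeal K (Submodule.span K t) := by
  have hmem (a : V) : a ∈ Submodule.span K s := hs ▸ Submodule.mem_top
  exact fun a x hx => ⟨
    mul_mem_span_of_forall_mul_mem (fun c hc x hx => (hst c hc x hx).1) (hmem a) hx,
    mul_mem_span_of_forall_mul_mem (fun x hx c hc => (hst c hc x hx).2) hx (hmem a)⟩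

theorem exists_mul_ne_zero_of_span_eq_top {K V : Type*} [CommSemiring K]
    [NonUnitalNonAssocSemiring V] [Module K V] [SMulCommClass K V V] [IsScalarTower K V V]
    {s : Set V} (hs : Submodule.span K s = ⊤) (hV : ∃ a b : V, a * b ≠ 0) :
    ∃ a ∈ s, ∃ b ∈ s, a * b ≠ 0 := by
  by_contra! h
  obtain ⟨a, b, hab⟩ := hV
  have hmem (v : V) : v ∈ Submodule.span K s := hs ▸ Submodule.mem_top
  have := mul_mem_span_of_forall_mul_mem (u := {0}) h (hmem a) (hmem b)
  rw [Submodule.span_zero_singleton, Submodule.mem_bot] at this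
  exact hab this

theorem IsGradedSimple.span_eq_top {K G V : Type*} [Field K] [NonUnitalNonAssocSemiring V]
    [Module K V] [SMulCommClass K V V] [IsScalarTower K V V] {𝒱 : G → Submodule K V}
    (hV : IsGradedSimple K 𝒱) {p : G → Module.End K V} (hp : IsProjectionFamily 𝒱 p) {s t : Set V}
    (hs : Submodule.span K s = ⊤) (hst : ∀ c ∈ s, ∀ x ∈ t, c * x ∈ t ∧ x * c ∈ t)
    (htp : ∀ g, ∀ x ∈ t, p g x ∈ t) {x : V} (hx : x ∈ t) (hx0 : x ≠ 0) :
    Submodule.span K t = ⊤ := by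
  refine (hV.2 _ (isMulIdeal_span hs hst) (hp.isHomogSubmodule_iff.2 fun g => ?_)).resolve_left
    fun hbot => hx0 (Submodule.span_eq_bot.1 hbot x hx)
  exact Submodule.span_le (p := (Submodule.span K t).comap (p g)).2
    fun y hy => Submodule.subset_span (htp g y hy)

variable {F FF V : Type*} [Field F] [Field FF] [Algebra F FF] [NonUnitalNonAssocRing V]
  [Module F V] [Module FF V] [IsScalarTower F FF V] [SMulCommClass F V V] [IsScalarTower F V V]
  {C L W : NonUnitalSubalgebra F V} {J : Submodule F V}

theorem IsCentralLocalization.le_of_mem_multScalars (hL : IsCentralLocalization FF C L)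
    (hJL : J ≤ L.toSubmodule) (hJ : ∀ x ∈ J, ∀ y ∈ L, x * y ∈ J ∧ y * x ∈ J) (hWC : W ≤ C)
    (hWJ : W.toSubmodule ≤ J) {z : FF} (hz : z ∈ multScalars FF W) (hz0 : z ≠ 0) :
    L.toSubmodule ≤ J := by
  intro y hy
  rw [← smul_inv_smul₀ hz0 y]
  exact apply_mem_of_mem_ambientMultAlg hJL (fun w hw => hJ w (hWJ hw)) hz
    (hL.inv_smul_mem (multScalars_mono hWC hz) hz0 hy)

variable {G A : Type*} [NonUnitalNonAssocRing A] [Module F A]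
  [SMulCommClass F A A] [IsScalarTower F A A] [Algebra (MvPolynomial (G × ℕ × ℕ) F) FF]
  [IsScalarTower F (MvPolynomial (G × ℕ × ℕ) F) FF]

theorem IsCentralLocalization.le_of_isIdeal {𝒜 : G → Submodule F A} {nU : G → ℕ}
    {bU : ∀ g : G, Module.Basis (Fin (nU g)) F (𝒜 g)} {L : NonUnitalSubalgebra F (FF ⊗[F] A)}
    (hL : IsCentralLocalization FF (genericAlg F FF 𝒜 nU bU) L)
    (hinj : Function.Injective (algebraMap (MvPolynomial (G × ℕ × ℕ) F) FF))
    (hsimp : IsGradedSimple FF fun g => (𝒜 g).baseChange FF)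
    {p : G → Module.End F A} (hp : IsProjectionFamily 𝒜 p)
    (hCp : ∀ g, ∀ x ∈ genericAlg F FF 𝒜 nU bU, (p g).baseChange FF x ∈ genericAlg F FF 𝒜 nU bU)
    {J : Submodule F (FF ⊗[F] A)} (hJL : J ≤ L.toSubmodule)
    (hJ : ∀ x ∈ J, ∀ y ∈ L, x * y ∈ J ∧ y * x ∈ J)
    (hJp : ∀ g, ∀ x ∈ J, (p g).baseChange FF x ∈ J) (hJ0 : J ≠ ⊥) : L.toSubmodule ≤ J := by
  set C := genericAlg F FF 𝒜 nU bU
  have hCJ (c) (hc : c ∈ C) (x) (hx : x ∈ J) : c * x ∈ J ∧ x * c ∈ J :=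
    (hJ x hx c (hL.le hc)).symm
  let W : NonUnitalSubalgebra F (FF ⊗[F] A) :=
    { J ⊓ C.toSubmodule with
      mul_mem' := fun hx hy => ⟨(hCJ _ hx.2 _ hy.1).1, C.mul_mem hx.2 hy.2⟩ }
  obtain ⟨x, hxJ, hx0⟩ := J.ne_bot_iff.1 hJ0
  obtain ⟨z, hz, hz0, hzx⟩ := hL.exists_smul_mem (hJL hxJ)
  have hspanC : Submodule.span FF (C : Set (FF ⊗[F] A)) = ⊤ := span_genericAlg_eq_top bU hinj hp
  have hWp (g) (w) (hw : w ∈ W) : (p g).baseChange FF w ∈ W := ⟨hJp g w hw.1, hCp g w hw.2⟩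
  have hspanW : Submodule.span FF (W : Set (FF ⊗[F] A)) = ⊤ :=
    hsimp.span_eq_top (hp.baseChange FF) hspanC
      (fun c hc w hw => ⟨⟨(hCJ c hc w hw.1).1, C.mul_mem hc hw.2⟩,
        ⟨(hCJ c hc w hw.1).2, C.mul_mem hw.2 hc⟩⟩)
      hWp ⟨smul_mem_of_mem_multScalars hCJ hz hxJ, hzx⟩ (smul_ne_zero hz0 hx0)
  have : Nontrivial A := not_subsingleton_iff_nontrivial.1 fun _ => hx0 (Subsingleton.elim x 0)
  obtain ⟨z', hz', hz'0⟩ := exists_ne_zero_mem_multScalars_of_span_eq_top bU hinj hp hz hz0 hspanW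
    hWp fun s hs w hw => ⟨smul_mem_of_mem_multScalars hCJ hs hw.1,
      smul_mem_self_of_mem_multScalars hs hw.2⟩
  exact hL.le_of_mem_multScalars hJL hJ (W := W) (fun w hw => hw.2) (fun w hw => hw.1) hz' hz'0

theorem IsCentralLocalization.isGradedSimple_subComp {𝒜 : G → Submodule F A}
    {nU : G → ℕ} {bU : ∀ g : G, Module.Basis (Fin (nU g)) F (𝒜 g)}
    {L : NonUnitalSubalgebra F (FF ⊗[F] A)}
    (hL : IsCentralLocalization FF (genericAlg F FF 𝒜 nU bU) L)
    (hinj : Function.Injective (algebraMap (MvPolynomial (G × ℕ × ℕ) F) FF))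
    (hsimp : IsGradedSimple FF fun g => (𝒜 g).baseChange FF)
    {p : G → Module.End F A} (hp : IsProjectionFamily 𝒜 p)
    (hCp : ∀ g, ∀ x ∈ genericAlg F FF 𝒜 nU bU, (p g).baseChange FF x ∈ genericAlg F FF 𝒜 nU bU) :
    IsGradedSimple F (subComp F FF 𝒜 L) := by
  obtain ⟨q, hq, hqp⟩ := hp.exists_subComp fun g x hx => hL.apply_mem (hCp g) hx
  refine ⟨?_, fun I hI hIhom => or_iff_not_imp_left.2 fun hI0 => ?_⟩
  · obtain ⟨a, ha, b, hb, hab⟩ :=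
      exists_mul_ne_zero_of_span_eq_top (span_genericAlg_eq_top bU hinj hp) hsimp.1
    exact ⟨⟨a, hL.le ha⟩, ⟨b, hL.le hb⟩, fun h => hab congr(($h : FF ⊗[F] A))⟩
  · let ι : L →ₗ[F] FF ⊗[F] A := L.toSubmodule.subtype
    have hle : L.toSubmodule ≤ I.map ι := by
      refine hL.le_of_isIdeal hinj hsimp hp hCp ?_ ?_ ?_ ?_
      · rintro _ ⟨x, -, rfl⟩
        exact x.2
      · rintro _ ⟨x, hx, rfl⟩ y hy
        exact ⟨⟨_, (hI ⟨y, hy⟩ x hx).2, rfl⟩, ⟨_, (hI ⟨y, hy⟩ x hx).1, rfl⟩⟩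
      · rintro g _ ⟨x, hx, rfl⟩
        exact ⟨q g x, hq.isHomogSubmodule_iff.1 hIhom g x hx, hqp g x⟩
      · exact ((Submodule.map_injective_of_injective L.toSubmodule.subtype_injective).ne_iff'
          (Submodule.map_bot ι)).2 hI0
    refine I.eq_top_iff'.2 fun y => ?_
    obtain ⟨x, hx, hxy⟩ := hle y.2
    rwa [← Subtype.ext hxy]

end LocalizationGradedSimple

section Injectivity

variable {F G FF A : Type*} [Field F] [Field FF] [Algebra F FF] [NonUnitalNonAssocRing A]
  [Module F A] [SMulCommClass F A A] [IsScalarTower F A A]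
  {p : G → Module.End F A} {L : NonUnitalSubalgebra F (FF ⊗[F] A)} {q : G → Module.End F L}

theorem exists_linearMap_extending_of_mem_gradedMultAlg
    (hqp : ∀ g x, (q g x : FF ⊗[F] A) = (p g).baseChange FF x) {r : Module.End F L}
    (hr : r ∈ gradedMultAlg (A := L) q) :
    ∃ R : Module.End FF (FF ⊗[F] A), ∀ x : L, R x = r x := by
  induction hr using Algebra.adjoin_induction with
  | mem r hr =>
    obtain (⟨a, rfl⟩ | ⟨a, rfl⟩) | ⟨g, rfl⟩ := hr
    · exact ⟨LinearMap.mulLeft FF (a : FF ⊗[F] A), fun _ => rfl⟩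
    · exact ⟨LinearMap.mulRight FF (a : FF ⊗[F] A), fun _ => rfl⟩
    · exact ⟨(p g).baseChange FF, fun x => (hqp g x).symm⟩
  | algebraMap c => exact ⟨algebraMap F FF c • 1, fun x => algebraMap_smul FF c (x : FF ⊗[F] A)⟩
  | add r s _ _ hr hs =>
    obtain ⟨R, hR⟩ := hr
    obtain ⟨S, hS⟩ := hs
    exact ⟨R + S, fun x => by simp [hR, hS]⟩
  | mul r s _ _ hr hs =>
    obtain ⟨R, hR⟩ := hr
    obtain ⟨S, hS⟩ := hs
    exact ⟨R * S, fun x => by simp [hR, hS]⟩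

/-- By density, some operator of the graded multiplication algebra of `L` sends `x i` to a nonzero
element and kills the other `x j`; extended to `FF ⊗ A`, it isolates the `i`-th coefficient. -/
theorem IsGradedSimple.eq_zero_of_sum_smul_eq_zero [CommGroup G] {𝒜 : G → Submodule F A}
    (hL : IsGradedSimple F (subComp F FF 𝒜 L)) (hq : IsProjectionFamily (subComp F FF 𝒜 L) q)
    (hqp : ∀ g x, (q g x : FF ⊗[F] A) = (p g).baseChange FF x) {ι : Type*} [Fintype ι] {x : ι → L}
    (hx : ∀ c : ι → Module.End F L,
      (∀ i, c i ∈ centroid F (A := L) ⊓ endGrading F (subComp F FF 𝒜 L) 1) →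
      ∑ i, c i (x i) = 0 → ∀ i, c i = 0)
    {lam : ι → FF} (hlam : ∑ i, lam i • (x i : FF ⊗[F] A) = 0) (i : ι) : lam i = 0 := by
  classical
  obtain ⟨a, b, hab⟩ := hL.1
  obtain ⟨r, hr, hrx⟩ := hL.exists_gradedMultAlg_apply_eq hq hx (Pi.single i (a * b))
  obtain ⟨R, hR⟩ := exists_linearMap_extending_of_mem_gradedMultAlg hqp hr
  have hsmul : lam i • ((a * b : L) : FF ⊗[F] A) = 0 := by
    have hRsum : ∑ j, lam j • ((Pi.single i (a * b) : ι → L) j : FF ⊗[F] A) = 0 := by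
      simpa only [map_sum, map_smul, hR, hrx, map_zero] using congr(R $hlam)
    rwa [Fintype.sum_eq_single i fun j hj => by simp [hj], Pi.single_eq_same] at hRsum
  exact (smul_eq_zero.1 hsmul).resolve_right fun h => hab (Subtype.ext h)

end Injectivity

theorem base_change_of_localization_is_iso_general
    {F : Type*} [Field F] {G : Type*} [CommGroup G] [DecidableEq G]
    {FF : Type*} [Field FF] [Algebra F FF] [Algebra (MvPolynomial (G × ℕ × ℕ) F) FF]
    [IsScalarTower F (MvPolynomial (G × ℕ × ℕ) F) FF]
    (hinj : Function.Injective (algebraMap (MvPolynomial (G × ℕ × ℕ) F) FF))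
    {A : Type*} [NonUnitalNonAssocRing A] [Module F A] [SMulCommClass F A A]
    [IsScalarTower F A A] (𝒜 : G → Submodule F A) (hgr : IsAlgGrading F 𝒜)
    (hsimp : IsGradedSimple F 𝒜)
    (hcentral : ∀ φ ∈ centroid F (A := A) ⊓ endGrading F 𝒜 1, ∃ c : F, φ = c • 1)
    (nU : G → ℕ) (bU : ∀ g : G, Module.Basis (Fin (nU g)) F (𝒜 g))
    (θ : Module.End F (genericAlg F FF 𝒜 nU bU) → FF)
    (hθ : ∀ s ∈ centerMultE F FF 𝒜 (genericAlg F FF 𝒜 nU bU), ∀ x : genericAlg F FF 𝒜 nU bU,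
      (s x : FF ⊗[F] A) = θ s • (x : FF ⊗[F] A))
    (L : NonUnitalSubalgebra F (FF ⊗[F] A))
    (hL : (L : Set (FF ⊗[F] A)) =
      {y | ∃ s ∈ centerMultE F FF 𝒜 (genericAlg F FF 𝒜 nU bU), s ≠ 0 ∧
        ∃ x ∈ genericAlg F FF 𝒜 nU bU, y = (θ s)⁻¹ • x}) :
    Submodule.span FF (L : Set (FF ⊗[F] A)) = ⊤ ∧
    ∀ (n : ℕ) (x : Fin n → L),
      (∀ c : Fin n → Module.End F L,
        (∀ i, c i ∈ centroid F (A := L) ⊓ endGrading F (subComp F FF 𝒜 L) 1) →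
        ∑ i, c i (x i) = 0 → ∀ i, c i = 0) →
      ∀ lam : Fin n → FF, ∑ i, lam i • (x i : FF ⊗[F] A) = 0 → ∀ i, lam i = 0 := by
  obtain ⟨p, hp⟩ := IsProjectionFamily.exists_of_isInternal hgr.1
  obtain ⟨a, b, hab⟩ := hsimp.1
  have : Nontrivial A := nontrivial_of_ne _ _ hab
  have hspan := span_genericAlg_eq_top bU hinj hp
  have hloc : IsCentralLocalization FF (genericAlg F FF 𝒜 nU bU) L := fun y =>
    (Set.ext_iff.1 hL y).trans (exists_centerMultE_inv_smul_iff hspan hθ)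
  have hCp := baseChange_apply_mem_genericAlg (FF := FF) bU hp hgr.2
  have hLsimp : IsGradedSimple F (subComp F FF 𝒜 L) :=
    hloc.isGradedSimple_subComp hinj (hsimp.baseChange FF hp hcentral) hp hCp
  obtain ⟨q, hq, hqp⟩ := hp.exists_subComp fun g x hx => hloc.apply_mem (hCp g) hx
  exact ⟨top_unique (hspan.ge.trans (Submodule.span_mono hloc.le)), fun n x hx lam hlam =>
    hLsimp.eq_zero_of_sum_smul_eq_zero hq hqp hx hlam⟩

/-- Generic-elements setup: the map `FF ⊗_{K_U} (S_U⁻¹F_U) → Ũ`, `λ̃ ⊗ x ↦ λ̃ • x`, is an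
isomorphism of `G`-graded algebras.  (Bijectivity of this canonical map is expressed by: `FF`-span
of `L = S_U⁻¹F_U` is all of `Ũ`, and every family of elements of `L` that is linearly independent
over `K_U = Γ(L)_e` remains linearly independent over `FF` in `Ũ`; multiplicativity and
gradedness of the canonical map are automatic.) -/
theorem base_change_of_localization_is_iso
    {F : Type*} [Field F] {G : Type*} [CommGroup G] [DecidableEq G]
    {FF : Type*} [Field FF] [Algebra F FF] [Algebra (MvPolynomial (G × ℕ × ℕ) F) FF]
    [IsScalarTower F (MvPolynomial (G × ℕ × ℕ) F) FF]
    (hinj : Function.Injective (algebraMap (MvPolynomial (G × ℕ × ℕ) F) FF))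
    {A : Type*} [NonUnitalNonAssocRing A] [Module F A] [SMulCommClass F A A]
    [IsScalarTower F A A] [FiniteDimensional F A]
    (𝒜 : G → Submodule F A) (hgr : IsAlgGrading F 𝒜) (hsimp : IsGradedSimple F 𝒜)
    (hbase : ∀ φ : Module.End F A,
      φ ∈ centroid F (A := A) ⊓ endGrading F 𝒜 1 ↔ ∃ c : F, φ = c • (1 : Module.End F A))
    (nU : G → ℕ) (bU : ∀ g : G, Module.Basis (Fin (nU g)) F (𝒜 g))
    (θ : Module.End F ↥(genericAlg F FF 𝒜 nU bU) → FF)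
    (hθ : ∀ s ∈ centerMultE F FF 𝒜 (genericAlg F FF 𝒜 nU bU),
      ∀ x : ↥(genericAlg F FF 𝒜 nU bU), ((s x : ↥(genericAlg F FF 𝒜 nU bU)) : FF ⊗[F] A) =
        θ s • (x : FF ⊗[F] A))
    -- `L` is the central localization `S_U⁻¹ F_U`, as a subalgebra of `Ũ`
    (L : NonUnitalSubalgebra F (FF ⊗[F] A))
    (hL : (L : Set (FF ⊗[F] A)) =
      {y | ∃ s ∈ centerMultE F FF 𝒜 (genericAlg F FF 𝒜 nU bU), s ≠ 0 ∧
        ∃ x ∈ genericAlg F FF 𝒜 nU bU, y = (θ s)⁻¹ • x})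
    -- `η` identifies `K_U = Γ(L)_e` with a subfield of `FF`, acting on `L` by scalars
    (η : Module.End F ↥L → FF)
    (hη : ∀ φ ∈ centroid F (A := ↥L) ⊓ endGrading F (subComp F FF 𝒜 L) 1,
      ∀ x : ↥L, ((φ x : ↥L) : FF ⊗[F] A) = η φ • (x : FF ⊗[F] A)) :
    -- surjectivity of `λ̃ ⊗ x ↦ λ̃ • x`: the `FF`-span of `L` is `Ũ`
    (Submodule.span FF (L : Set (FF ⊗[F] A)) = ⊤) ∧
    -- injectivity: a `K_U`-independent family of `L` is `FF`-independent in `Ũ`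
    (∀ (n : ℕ) (x : Fin n → ↥L),
      (∀ c : Fin n → Module.End F ↥L,
        (∀ i, c i ∈ centroid F (A := ↥L) ⊓ endGrading F (subComp F FF 𝒜 L) 1) →
        ∑ i, (c i) (x i) = 0 → ∀ i, c i = 0) →
      ∀ lam : Fin n → FF, ∑ i, lam i • ((x i : FF ⊗[F] A)) = 0 → ∀ i, lam i = 0) :=
  base_change_of_localization_is_iso_general hinj 𝒜 hgr hsimp (fun φ => (hbase φ).1) nU bU θ hθ L hL
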